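/- arXiv:math/0606374 — 3 statements merged into one kernel-verified Lean document; each statement's English description precedes it below -/
import Mathlib

section
/- Let L be an n×n matrix over F₂[x₁,…,x_m] all of whose entries are homogeneous linear forms, written L = Σ_i L_i x_i with L_i ∈ M_n(F₂). If L is triangulable, i.e., there exists N ∈ GL_n(F₂) such that N⁻¹L_iN is upper triangular for every i, then the matrix β(L) + L² over F₂[x₁,…,x_m] is nilpotent; in fact (β(L) + L²)ⁿ = 0. -/
open MvPolynomial

/-- The Bockstein operator: the unique `F₂`-derivation of `F₂[x₁,…,x_m]`
with `β(x_i) = x_i²`, given by `β(f) = Σ_i x_i² ∂f/∂x_i`. -/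
noncomputable def bockstein {m : ℕ} (f : MvPolynomial (Fin m) (ZMod 2)) :
    MvPolynomial (Fin m) (ZMod 2) :=
  ∑ i : Fin m, X i ^ 2 * pderiv i f

/-!
Since `β` is `F₂`-linear, `M ↦ β(M) + M²` commutes with conjugation by matrices over `F₂`, so `L`
may be taken upper triangular. Both `β` and squaring are `F₂`-linear and send `x_i` to `x_i²`, so
`β(ℓ) = ℓ²` for every linear form `ℓ`. Hence the diagonal entries `β(ℓ) + ℓ²` all vanish, and
`β(L) + L²` is strictly upper triangular.
-/

section UpperTriangular

variable {ι R : Type*} [Fintype ι] [LinearOrder ι]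

theorem mul_apply_self_of_isUpperTriangular [NonUnitalNonAssocSemiring R] {M N : Matrix ι ι R}
    (hM : M.IsUpperTriangular) (hN : N.IsUpperTriangular) (i : ι) :
    (M * N) i i = M i i * N i i := by
  rw [Matrix.mul_apply]
  refine Fintype.sum_eq_single i fun k hk ↦ ?_
  rcases hk.lt_or_gt with hki | hik
  · rw [hM hki, zero_mul]
  · rw [hN hik, mul_zero]

theorem pow_card_eq_zero_of_isUpperTriangular [DecidableEq ι] [CommRing R] {M : Matrix ι ι R}
    (hM : M.IsUpperTriangular) (hdiag : ∀ i, M i i = 0) : M ^ Fintype.card ι = 0 := by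
  have hcharpoly : M.charpoly = Polynomial.X ^ Fintype.card ι := by
    simp [M.charpoly_of_isUpperTriangular hM, hdiag]
  simpa [hcharpoly] using M.aeval_self_charpoly

theorem map_add_mul_self_pow_card_eq_zero_of_isUpperTriangular [DecidableEq ι] [CommRing R]
    {F : Type*} [FunLike F R R] [ZeroHomClass F R R] (δ : F) {T : Matrix ι ι R}
    (hT : T.IsUpperTriangular) (hdiag : ∀ i, δ (T i i) + T i i * T i i = 0) :
    (T.map δ + T * T) ^ Fintype.card ι = 0 := by
  refine pow_card_eq_zero_of_isUpperTriangular ((hT.map δ).add (hT.mul hT)) fun i ↦ ?_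
  rw [Matrix.add_apply, Matrix.map_apply, mul_apply_self_of_isUpperTriangular hT hT, hdiag]

end UpperTriangular

section ConstantMatrices

variable {A R l m n : Type*} [CommSemiring A] [Semiring R] [Algebra A R] [Fintype m]

theorem map_linearMap_map_algebraMap_mul (δ : R →ₗ[A] R) (P : Matrix l m A) (M : Matrix m n R) :
    (P.map (algebraMap A R) * M).map δ = P.map (algebraMap A R) * M.map δ := by
  ext i j
  simp [Matrix.mul_apply, ← Algebra.smul_def]

theorem map_linearMap_mul_map_algebraMap (δ : R →ₗ[A] R) (M : Matrix l m R) (P : Matrix m n A) :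
    (M * P.map (algebraMap A R)).map δ = M.map δ * P.map (algebraMap A R) := by
  ext i j
  simp [Matrix.mul_apply, ← Algebra.commutes, ← Algebra.smul_def]

theorem semiconjBy_map_add_mul_self (δ : R →ₗ[A] R) {P : Matrix m m A} {S T : Matrix m m R}
    (h : SemiconjBy (P.map (algebraMap A R)) S T) :
    SemiconjBy (P.map (algebraMap A R)) (S.map δ + S * S) (T.map δ + T * T) := by
  have hδ : SemiconjBy (P.map (algebraMap A R)) (S.map δ) (T.map δ) := by
    rw [SemiconjBy, ← map_linearMap_map_algebraMap_mul, h.eq, map_linearMap_mul_map_algebraMap]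
  exact hδ.add_right (h.mul_right h)

end ConstantMatrices

theorem map_add_mul_self_pow_card_eq_zero_of_semiconjBy {A R ι : Type*} [CommSemiring A]
    [CommRing R] [Algebra A R] [Fintype ι] [LinearOrder ι] [DecidableEq ι] (δ : R →ₗ[A] R)
    {P : Matrix ι ι A} (hP : IsUnit P) {T L : Matrix ι ι R}
    (hPTL : SemiconjBy (P.map (algebraMap A R)) T L) (hT : T.IsUpperTriangular)
    (hdiag : ∀ i, δ (T i i) + T i i * T i i = 0) :
    (L.map δ + L * L) ^ Fintype.card ι = 0 := by
  have hpow := (semiconjBy_map_add_mul_self δ hPTL).pow_right (Fintype.card ι)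
  have hT_pow : (T.map δ + T * T) ^ Fintype.card ι = 0 :=
    map_add_mul_self_pow_card_eq_zero_of_isUpperTriangular δ hT hdiag
  have hP_map : IsUnit (P.map (algebraMap A R)) := hP.map (algebraMap A R).mapMatrix
  rwa [SemiconjBy, hT_pow, mul_zero, eq_comm, hP_map.mul_left_eq_zero] at hpow

section LinearPencil

variable {σ R l m n : Type*} [Fintype σ] [CommSemiring R]

/-- The matrix of linear forms `Σ_k A_k x_k` with coefficient matrices `A_k`, viewed over the
polynomial ring: the form in which the matrices `L` and `N⁻¹LN` occur. -/
noncomputable def linearPencil (A : σ → Matrix m n R) : Matrix m n (MvPolynomial σ R) :=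
  ∑ k, (X k : MvPolynomial σ R) • (A k).map C

theorem linearPencil_apply (A : σ → Matrix m n R) (i : m) (j : n) :
    linearPencil A i j = ∑ k, A k i j • X k := by
  simp [linearPencil, Matrix.sum_apply, smul_eq_C_mul, mul_comm]

theorem map_algebraMap_mul_linearPencil [Fintype m] (P : Matrix l m R) (A : σ → Matrix m n R) :
    P.map (algebraMap R (MvPolynomial σ R)) * linearPencil A = linearPencil fun k ↦ P * A k := by
  simp [linearPencil, Matrix.mul_sum, Matrix.map_mul]

theorem linearPencil_mul_map_algebraMap [Fintype m] (A : σ → Matrix l m R) (P : Matrix m n R) :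
    linearPencil A * P.map (algebraMap R (MvPolynomial σ R)) = linearPencil fun k ↦ A k * P := by
  simp [linearPencil, Matrix.sum_mul, Matrix.map_mul]

theorem isUpperTriangular_linearPencil [LT m] {A : σ → Matrix m m R}
    (hA : ∀ k, (A k).IsUpperTriangular) : (linearPencil A).IsUpperTriangular := by
  intro i j hij
  simp [linearPencil_apply, hA _ hij]

end LinearPencil

theorem semiconjBy_linearPencil_conj {σ R n : Type*} [Fintype σ] [CommRing R] [Fintype n]
    [DecidableEq n] {P : Matrix n n R} (hP : IsUnit P) (A : σ → Matrix n n R) :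
    SemiconjBy (P.map (algebraMap R (MvPolynomial σ R)))
      (linearPencil fun k ↦ P⁻¹ * A k * P) (linearPencil A) := by
  have hdet : IsUnit P.det := P.isUnit_iff_isUnit_det.mp hP
  rw [SemiconjBy, map_algebraMap_mul_linearPencil, linearPencil_mul_map_algebraMap]
  simp only [Matrix.mul_assoc, P.mul_nonsing_inv_cancel_left _ hdet]

section Bockstein

/-- `bockstein` bundled as a derivation, which gives access to its linearity. -/
noncomputable def bocksteinDerivation (m : ℕ) :
    Derivation (ZMod 2) (MvPolynomial (Fin m) (ZMod 2)) (MvPolynomial (Fin m) (ZMod 2)) :=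
  ∑ i : Fin m, (X i ^ 2 : MvPolynomial (Fin m) (ZMod 2)) • pderiv i

variable {m : ℕ}

theorem coe_bocksteinDerivation : ⇑(bocksteinDerivation m) = bockstein := by
  ext1 f
  rw [bocksteinDerivation, ← Derivation.coeFnAddMonoidHom_apply, map_sum, Finset.sum_apply]
  simp only [Derivation.coeFnAddMonoidHom_apply, Derivation.smul_apply, smul_eq_mul, bockstein]

theorem bocksteinDerivation_X (i : Fin m) : bocksteinDerivation m (X i) = X i ^ 2 := by
  simp [coe_bocksteinDerivation, bockstein, pderiv_X, Pi.single_apply]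

theorem bocksteinDerivation_sum_smul_X (a : Fin m → ZMod 2) :
    bocksteinDerivation m (∑ i, a i • X i) = (∑ i, a i • X i) ^ 2 := by
  have frobenius_fixed (c : ZMod 2) : c ^ 2 = c := ZMod.pow_card c
  simp only [map_sum, Derivation.map_smul, bocksteinDerivation_X, CharTwo.sum_sq, smul_pow,
    frobenius_fixed]

end Bockstein

/-- If `L = Σ_i L_i x_i` is a matrix of homogeneous linear forms over
`F₂[x₁,…,x_m]` and there exists `N ∈ GL_n(F₂)` with each `N⁻¹L_iN` upper triangular,
then `(β(L) + L²)ⁿ = 0`. -/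
theorem triangulable_implies_nilpotent {m n : ℕ}
    (Ls : Fin m → Matrix (Fin n) (Fin n) (ZMod 2))
    (L : Matrix (Fin n) (Fin n) (MvPolynomial (Fin m) (ZMod 2)))
    (hL : L = ∑ i : Fin m, (X i : MvPolynomial (Fin m) (ZMod 2)) • (Ls i).map C)
    (N : Matrix (Fin n) (Fin n) (ZMod 2)) (hN : IsUnit N)
    (htri : ∀ i, (N⁻¹ * Ls i * N).BlockTriangular id) :
    (L.map bockstein + L * L) ^ n = 0 := by
  let T := linearPencil fun k ↦ N⁻¹ * Ls k * N
  have hNTL : SemiconjBy (N.map (algebraMap _ _)) T L := hL ▸ semiconjBy_linearPencil_conj hN Ls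
  have hT : T.IsUpperTriangular := isUpperTriangular_linearPencil htri
  have hdiag (i : Fin n) : bocksteinDerivation m (T i i) + T i i * T i i = 0 := by
    simp only [T, linearPencil_apply, bocksteinDerivation_sum_smul_X, ← sq,
      CharTwo.add_self_eq_zero]
  simpa [coe_bocksteinDerivation] using
    map_add_mul_self_pow_card_eq_zero_of_semiconjBy (bocksteinDerivation m).toLinearMap hN hNTL
      hT hdiag
end

section
/- Let Q : W → V be a quadratic map between nonzero finite-dimensional F₂-vector spaces which is Frattini, i.e., the image of Q spans V. Then for every positive integer k with k ≤ min(dim V, dim W), there exist linearly independent vectors w₁,…,w_k ∈ W such that Q(w₁),…,Q(w_k) are linearly independent in V. -/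
/-- The polarization (associated bilinear map) of a map `Q`:
`B(x,y) = Q(x+y) + Q(x) + Q(y)`. -/
def qpolar {W V : Type*} [Add W] [Add V] (Q : W → V) (x y : W) : V :=
  Q (x + y) + Q x + Q y

/-- `Q` is a quadratic map between `F₂`-vector spaces: its polarization is `F₂`-bilinear. -/
def IsQuadraticMap {W V : Type*} [AddCommGroup W] [Module (ZMod 2) W]
    [AddCommGroup V] [Module (ZMod 2) V] (Q : W → V) : Prop :=
  (∀ x y z : W, qpolar Q (x + y) z = qpolar Q x z + qpolar Q y z) ∧
  (∀ x y z : W, qpolar Q x (y + z) = qpolar Q x y + qpolar Q x z)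

/-!
Take a set `s` that is maximal among those for which both the vectors of `s` and their values under
`Q` are linearly independent. By maximality, `Q x` lies in `R := span Q(s)` for every `x` outside
`P := span s`. If `P` is not the whole space, fix `a ∉ P`. For `p ∈ s`, the vectors `a` and `a + p`
lie outside `P`, so the polar form `Q (a + p) - Q a - Q p` lies in `R`; by linearity in `p` the
same holds for all `p ∈ P`. Then `Q p ∈ R` as well, because `a + p ∉ P`. So `R` contains the image
of `Q` and is everything. Hence `s` is a basis of `W` or `Q(s)` is a basis of `V`, and either way
`s` is large enough to contain the required family.
-/

open Submodule QuadraticMap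

universe u v w

section Polar

variable {K W V : Type*} [Ring K] [AddCommGroup W] [Module K W] [AddCommGroup V] [Module K V]
  {f : W → V} {s : Set W} {R : Submodule K V} {a : W}

theorem polar_mem_of_forall_notMem_span_mem (hf : IsLinearMap K (polar f a))
    (hs : Set.MapsTo f s R) (hout : ∀ x ∉ span K s, f x ∈ R) (ha : a ∉ span K s)
    {p : W} (hp : p ∈ span K s) : polar f a p ∈ R := by
  suffices h : span K s ≤ R.comap (hf.mk' _) from h hp
  refine span_le.2 fun q hq ↦ ?_
  have haq : a + q ∉ span K s := by rwa [Submodule.add_mem_iff_left _ (subset_span hq)]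
  exact R.sub_mem (R.sub_mem (hout _ haq) (hout a ha)) (hs hq)

theorem mem_of_forall_notMem_span_mem (hf : IsLinearMap K (polar f a))
    (hs : Set.MapsTo f s R) (hout : ∀ x ∉ span K s, f x ∈ R) (ha : a ∉ span K s)
    (x : W) : f x ∈ R := by
  by_cases hx : x ∈ span K s
  · have hax : a + x ∉ span K s := by rwa [Submodule.add_mem_iff_left _ hx]
    have hpolar : f (a + x) - f a - f x ∈ R :=
      polar_mem_of_forall_notMem_span_mem hf hs hout ha hx
    exact (R.sub_mem_iff_right (R.sub_mem (hout _ hax) (hout a ha))).1 hpolar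
  · exact hout x hx

end Polar

theorem exists_linearIndepOn_and_forall_mem_span_or {ι K W V : Type*} [DivisionRing K]
    [AddCommGroup W] [Module K W] [AddCommGroup V] [Module K V] (f : ι → W) (g : ι → V) :
    ∃ s : Set ι, LinearIndepOn K f s ∧ LinearIndepOn K g s ∧
      ∀ i, f i ∈ span K (f '' s) ∨ g i ∈ span K (g '' s) := by
  obtain ⟨s, hs⟩ := zorn_subset {s : Set ι | LinearIndepOn K f s ∧ LinearIndepOn K g s}
    fun c hc hchain ↦ ⟨⋃₀ c,
      ⟨linearIndepOn_sUnion_of_directed hchain.directedOn fun t ht ↦ (hc ht).1,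
        linearIndepOn_sUnion_of_directed hchain.directedOn fun t ht ↦ (hc ht).2⟩,
      fun _ ↦ Set.subset_sUnion_of_mem⟩
  refine ⟨s, hs.prop.1, hs.prop.2, fun i ↦ ?_⟩
  by_contra! ⟨hfi, hgi⟩
  have hi : i ∈ s := hs.mem_of_prop_insert ⟨hs.prop.1.insert hfi, hs.prop.2.insert hgi⟩
  exact hfi (subset_span (Set.mem_image_of_mem f hi))

theorem exists_linearIndepOn_and_span_eq_top_or {K W V : Type*} [DivisionRing K]
    [AddCommGroup W] [Module K W] [AddCommGroup V] [Module K V] {Q : W → V}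
    (hQ : ∀ x, IsLinearMap K (polar Q x)) (hspan : span K (Set.range Q) = ⊤) :
    ∃ s : Set W, LinearIndepOn K id s ∧ LinearIndepOn K Q s ∧
      (span K s = ⊤ ∨ span K (Q '' s) = ⊤) := by
  obtain ⟨s, hs, hQs, hmax⟩ := exists_linearIndepOn_and_forall_mem_span_or (K := K) id Q
  rw [Set.image_id] at hmax
  refine ⟨s, hs, hQs, or_iff_not_imp_left.2 fun hne ↦ ?_⟩
  obtain ⟨a, ha⟩ : ∃ a, a ∉ span K s := by simpa [eq_top_iff'] using hne
  have hmem (x : W) : Q x ∈ span K (Q '' s) :=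
    mem_of_forall_notMem_span_mem (hQ a) (fun _ hp ↦ subset_span (Set.mem_image_of_mem Q hp))
      (fun x ↦ (hmax x).resolve_left) ha x
  rw [eq_top_iff, ← hspan, span_le]
  exact Set.range_subset_iff.2 hmem

theorem nonempty_embedding_of_lift_mk_le_lift_rank {R : Type*} {M : Type v} {ι : Type w}
    {κ : Type*} [Ring R] [StrongRankCondition R] [AddCommGroup M] [Module R M]
    (b : Module.Basis κ R M)
    (h : Cardinal.lift.{v} (Cardinal.mk ι) ≤ Cardinal.lift.{w} (Module.rank R M)) :
    Nonempty (ι ↪ κ) := by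
  have := nontrivial_of_invariantBasisNumber R
  rw [← b.mk_range_eq_rank] at h
  exact (Cardinal.lift_mk_le'.1 h).map
    (·.trans (Equiv.ofInjective b b.injective).symm.toEmbedding)

theorem frattini_nice_basis_general {K : Type*} {W : Type u} {V : Type v} {ι : Type w}
    [DivisionRing K] [AddCommGroup W] [Module K W] [AddCommGroup V] [Module K V] {Q : W → V}
    (hQ : ∀ x, IsLinearMap K (polar Q x)) (hspan : span K (Set.range Q) = ⊤)
    (hV : Cardinal.lift.{v} (Cardinal.mk ι) ≤ Cardinal.lift.{w} (Module.rank K V))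
    (hW : Cardinal.lift.{u} (Cardinal.mk ι) ≤ Cardinal.lift.{w} (Module.rank K W)) :
    ∃ w : ι → W, LinearIndependent K w ∧ LinearIndependent K fun i ↦ Q (w i) := by
  obtain ⟨s, hs, hQs, htop⟩ := exists_linearIndepOn_and_span_eq_top_or hQ hspan
  obtain ⟨e⟩ : Nonempty (ι ↪ s) := by
    rcases htop with htop | htop
    · exact nonempty_embedding_of_lift_mk_le_lift_rank (.mk hs (by simp [htop])) hW
    · exact nonempty_embedding_of_lift_mk_le_lift_rank
        (.mk hQs (by rw [← Set.image_eq_range, htop])) hV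
  exact ⟨fun i ↦ e i, hs.comp e e.injective, hQs.comp e e.injective⟩

theorem qpolar_eq_polar {W V : Type*} [AddCommGroup W] [AddCommGroup V]
    [Module (ZMod 2) V] (Q : W → V) : qpolar Q = polar Q := by
  ext x y
  simp only [qpolar, polar, ZModModule.sub_eq_add]

theorem IsQuadraticMap.isLinearMap_polar {W V : Type*} [AddCommGroup W] [Module (ZMod 2) W]
    [AddCommGroup V] [Module (ZMod 2) V] {Q : W → V} (hQ : IsQuadraticMap Q) (x : W) :
    IsLinearMap (ZMod 2) (polar Q x) :=
  ((AddMonoidHom.mk' (polar Q x) (qpolar_eq_polar Q ▸ hQ.2 x)).toZModLinearMap 2).isLinear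

/-- If `Q : W → V` is a Frattini quadratic map between nonzero
finite-dimensional `F₂`-vector spaces, then for every `0 < k ≤ min(dim V, dim W)` there are
linearly independent `w₁,…,w_k` in `W` with `Q(w₁),…,Q(w_k)` linearly independent in `V`. -/
theorem frattini_nice_basis {W V : Type*}
    [AddCommGroup W] [Module (ZMod 2) W] [AddCommGroup V] [Module (ZMod 2) V]
    [FiniteDimensional (ZMod 2) W] [FiniteDimensional (ZMod 2) V]
    [Nontrivial W] [Nontrivial V]
    (Q : W → V) (hQ : IsQuadraticMap Q)
    (hFrat : Submodule.span (ZMod 2) (Set.range Q) = ⊤)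
    (k : ℕ) (hk : 0 < k)
    (hkV : k ≤ Module.finrank (ZMod 2) V) (hkW : k ≤ Module.finrank (ZMod 2) W) :
    ∃ w : Fin k → W, LinearIndependent (ZMod 2) w ∧
      LinearIndependent (ZMod 2) (fun i => Q (w i)) := by
  exact frattini_nice_basis_general hQ.isLinearMap_polar hFrat
    (by simpa [← Module.finrank_eq_rank] using hkV) (by simpa [← Module.finrank_eq_rank] using hkW)
end

section
/- Let Q : F₂^n → F₂^n be a quadratic map which is Bockstein closed, effective (Q(w) = 0 implies w = 0), and Frattini (the image of Q spans F₂^n), with associated quadratic polynomials q₁,…,q_n ∈ F₂[x₁,…,x_n], regarded as a column vector q. If L₁ and L₂ are n×n matrices over F₂[x₁,…,x_n] whose entries are homogeneous linear forms and β(q) = L₁q and β(q) = L₂q (with β applied entrywise), then L₁ = L₂. -/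
open MvPolynomial

/-- The quadratic polynomials associated to a quadratic map `Q : F₂^m → F₂^n`:
`q_k = Σ_i Q_k(e_i) x_i² + Σ_{i<j} B_k(e_i,e_j) x_i x_j`. -/
noncomputable def assocPoly {m n : ℕ} (Q : (Fin m → ZMod 2) → (Fin n → ZMod 2)) (k : Fin n) :
    MvPolynomial (Fin m) (ZMod 2) :=
  (∑ i : Fin m, C (Q (Pi.single i 1) k) * X i ^ 2) +
  ∑ i : Fin m, ∑ j : Fin m,
    if i < j then C (qpolar Q (Pi.single i 1) (Pi.single j 1) k) * X i * X j else 0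

/-!
Write `S = F₂[x₁, …, x_n]`, `I = (q₁, …, q_n)`. The `q_k` define an extension of `Q` to any field
`K ⊇ F₂`, and Bockstein closedness says that a zero `y` of this extension is orthogonal to its
Frobenius twist `y²`. Applied to the zeros `y + y^(2^t)`, this makes the whole Frobenius orbit of
`y` totally singular, so for finite `K` the trace of every multiple of `y` is a zero of `Q` over
`F₂`. As `Q` is effective and the trace form is nondegenerate, `y = 0`. By the Nullstellensatz
`S ⧸ I` is finite-dimensional.

Now let `p` be a prime, `q` a family of `n` polynomials over `F_p` in `n` variables with `S ⧸ I`
finite-dimensional, `W` a linear complement of `I`, and `J = (q₁^p, …, q_n^p)`, which is the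
extension of `I` along Frobenius. Since `S` is free over `S^p = {s^p | s ∈ S}` on the monomials
`x^a` with `0 ≤ a_i < p`, the `p^n` spaces `W^p x^a` are independent modulo `J`. The `p^n` spaces
`W q^a` span `S` modulo `J`, so by a dimension count they are independent too. Hence
`f ∏ q_i^(p-1) ∈ J` forces `f ∈ I`. If `∑ m_i q_i = 0`, then each `m_k ∏ q_i^(p-1)` lies in `J`,
so `m_k ∈ I`; when the `q_i` are homogeneous of degree `d` and `m_k` has smaller degree, `m_k = 0`.
-/

section ExpandComponent

variable {σ R : Type*} {p : ℕ}

theorem nsmul_add_inj {a b u v : σ →₀ ℕ} (ha : ∀ i, a i < p) (hb : ∀ i, b i < p) :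
    p • u + a = p • v + b ↔ u = v ∧ a = b := by
  refine ⟨fun h => ?_, by rintro ⟨rfl, rfl⟩; rfl⟩
  have hdigit i : a i = b i := by
    have hi := congrArg (· % p) (DFunLike.congr_fun h i)
    simpa [Nat.mod_eq_of_lt (ha i), Nat.mod_eq_of_lt (hb i)] using hi
  obtain rfl : a = b := Finsupp.ext hdigit
  refine ⟨Finsupp.ext fun i => ?_, rfl⟩
  simpa [((Nat.zero_le _).trans_lt (ha i)).ne'] using DFunLike.congr_fun h i

theorem nsmul_le_nsmul_add_iff {a u v : σ →₀ ℕ} (ha : ∀ i, a i < p) :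
    p • v ≤ p • u + a ↔ v ≤ u := by
  refine forall_congr' fun i => ⟨fun h => ?_, fun h => ?_⟩
  · have hlt : p * v i < p * (u i + 1) := by
      simpa [mul_add] using h.trans_lt (Nat.add_lt_add_left (ha i) _)
    exact Nat.lt_succ_iff.1 (Nat.lt_of_mul_lt_mul_left hlt)
  · exact (Nat.mul_le_mul_left p h).trans (Nat.le_add_right _ _)

variable [CommSemiring R] {a b : σ →₀ ℕ}

/-- The `a`-th component of a polynomial when the polynomial ring is regarded as a module over
the image of `expand p`, with basis the monomials whose exponents are less than `p`. -/
noncomputable def expandComponent (ha : ∀ i, a i < p) : MvPolynomial σ R →ₗ[R] MvPolynomial σ R :=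
  (AddMonoidAlgebra.coeffLinearEquiv R).symm.toLinearMap ∘ₗ
    Finsupp.lcomapDomain (fun u => p • u + a) (fun _ _ h => ((nsmul_add_inj ha ha).1 h).1) ∘ₗ
      (AddMonoidAlgebra.coeffLinearEquiv R).toLinearMap

theorem coeff_expandComponent (ha : ∀ i, a i < p) (u : σ →₀ ℕ) (f : MvPolynomial σ R) :
    coeff u (expandComponent ha f) = coeff (p • u + a) f :=
  rfl

theorem expandComponent_expand_mul (ha : ∀ i, a i < p) (f g : MvPolynomial σ R) :
    expandComponent ha (expand p f * g) = f * expandComponent ha g := by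
  induction f using MvPolynomial.induction_on' with
  | add f₁ f₂ h₁ h₂ => simp only [map_add, add_mul, h₁, h₂]
  | monomial v r =>
    ext u
    simp only [coeff_expandComponent, expand_monomial, coeff_monomial_mul',
      nsmul_le_nsmul_add_iff ha]
    refine if_ctx_congr Iff.rfl (fun hvu => ?_) fun _ => rfl
    have hsub : p • u + a - p • v = p • (u - v) + a := by
      ext i
      have := Nat.mul_le_mul_left p (hvu i)
      simp only [Finsupp.tsub_apply, Finsupp.add_apply, Finsupp.smul_apply, smul_eq_mul, mul_tsub]
      omega
    rw [hsub]

theorem expandComponent_monomial [DecidableEq σ] (ha : ∀ i, a i < p) (hb : ∀ i, b i < p) :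
    expandComponent ha (monomial b (1 : R)) = if b = a then 1 else 0 := by
  ext u
  have hiff : b = p • u + a ↔ 0 = u ∧ b = a := by
    simpa using nsmul_add_inj (u := 0) (v := u) hb ha
  rw [coeff_expandComponent, coeff_monomial, if_congr hiff rfl rfl]
  split_ifs <;> simp_all [coeff_one]

theorem expandComponent_mem (ha : ∀ i, a i < p) {I : Ideal (MvPolynomial σ R)}
    {f : MvPolynomial σ R} (hf : f ∈ I.map (expand p)) : expandComponent ha f ∈ I := by
  suffices ∀ g, expandComponent ha (f * g) ∈ I by simpa using this 1
  induction hf using Submodule.span_induction with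
  | mem f hf =>
    obtain ⟨f, hf, rfl⟩ := hf
    intro g
    exact (expandComponent_expand_mul ha f g).symm ▸ I.mul_mem_right _ hf
  | zero => simp
  | add f₁ f₂ _ _ h₁ h₂ =>
    intro g
    simpa only [add_mul, map_add] using I.add_mem (h₁ g) (h₂ g)
  | smul c f _ hf =>
    intro g
    simpa only [smul_eq_mul, mul_comm c, mul_assoc] using hf (c * g)

end ExpandComponent

section MulCombination

variable {R S M E : Type*} [CommSemiring R] [CommSemiring S] [Algebra R S] [AddCommMonoid M]
  [Module R M] [Fintype E]

/-- The `R`-linear map `w ↦ ∑ e, f (w e) * b e`: linear combinations of the elements `b e` of `S`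
with coefficients in the image of `f`, which is only an `R`-submodule of `S`. -/
def mulCombination (f : M →ₗ[R] S) (b : E → S) : (E → M) →ₗ[R] S :=
  ∑ e, LinearMap.mulRight R (b e) ∘ₗ f ∘ₗ LinearMap.proj e

theorem mulCombination_apply (f : M →ₗ[R] S) (b : E → S) (w : E → M) :
    mulCombination f b w = ∑ e, f (w e) * b e := by
  simp [mulCombination]

theorem mulCombination_single [DecidableEq E] (f : M →ₗ[R] S) (b : E → S) (e : E) (w : M) :
    mulCombination f b (Pi.single e w) = f w * b e := by
  rw [mulCombination_apply, Fintype.sum_eq_single e fun d hd => by simp [hd], Pi.single_eq_same]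

end MulCombination

section PowerSpanning

variable {R S ι : Type*} [CommRing R] [CommRing S] [Algebra R S] [Fintype ι]

theorem mul_prod_pow_mem_span_range_pow {p : ℕ} (q : ι → S) {e : ι → ℕ} {j : ι} (hj : p ≤ e j)
    (s : S) : s * ∏ i, q i ^ e i ∈ Ideal.span (Set.range fun i => q i ^ p) :=
  Ideal.mul_mem_left _ _ <| Ideal.mem_of_dvd _
    ((pow_dvd_pow _ hj).trans (Finset.dvd_prod_of_mem _ (Finset.mem_univ j)))
    (Ideal.subset_span ⟨j, rfl⟩)

theorem prod_pow_add_single [DecidableEq ι] (q : ι → S) (e : ι → ℕ) (j : ι) :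
    ∏ i, q i ^ (e + (Pi.single j 1 : ι → ℕ)) i = q j * ∏ i, q i ^ e i := by
  simp_rw [Pi.add_apply, pow_add, Finset.prod_mul_distrib, Pi.single_apply]
  rw [mul_comm]
  simp

theorem mul_prod_pow_mem_range_mulCombination_sup [DecidableEq ι] (p : ℕ) (q : ι → S)
    {W : Submodule R S} (hW : Codisjoint W ((Ideal.span (Set.range q)).restrictScalars R))
    (N : ℕ) (s : S) (e : ι → ℕ) (he : Fintype.card ι * (p - 1) < N + ∑ i, e i) :
    s * ∏ i, q i ^ e i ∈ LinearMap.range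
        (mulCombination W.subtype fun a : ι → Fin p => ∏ i, q i ^ (a i : ℕ)) ⊔
      (Ideal.span (Set.range fun i => q i ^ p)).restrictScalars R := by
  -- `N` bounds how far the total exponent can grow before some `q i ^ p` divides the product:
  -- splitting `s = w + ∑ j, c j * q j` raises it by one in every term but the first.
  induction N generalizing s e with
  | zero =>
    obtain ⟨j, hj⟩ : ∃ j, p ≤ e j := by
      by_contra! hlt
      have hsum : ∑ i, e i ≤ Fintype.card ι * (p - 1) := by
        simpa using Finset.sum_le_card_nsmul Finset.univ e (p - 1) fun i _ =>
          Nat.le_sub_one_of_lt (hlt i)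
      omega
    exact Submodule.mem_sup_right (mul_prod_pow_mem_span_range_pow q hj s)
  | succ N ih =>
    by_cases! hlarge : ∃ j, p ≤ e j
    · obtain ⟨j, hj⟩ := hlarge
      exact Submodule.mem_sup_right (mul_prod_pow_mem_span_range_pow q hj s)
    have hsum (j : ι) : Fintype.card ι * (p - 1) < N + ∑ i, (e + (Pi.single j 1 : ι → ℕ)) i := by
      simp only [Pi.add_apply, Finset.sum_add_distrib, Finset.sum_pi_single', Finset.mem_univ,
        if_true]
      omega
    obtain ⟨w, hw, g, hg, rfl⟩ := Submodule.mem_sup.1 (hW.eq_top.ge (Submodule.mem_top (x := s)))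
    obtain ⟨c, rfl⟩ := Ideal.mem_span_range_iff_exists_fun.1 hg
    rw [add_mul, Finset.sum_mul]
    refine add_mem (Submodule.mem_sup_left ⟨Pi.single (fun i => ⟨e i, hlarge i⟩) ⟨w, hw⟩, ?_⟩)
      (sum_mem fun j _ => ?_)
    · simp [mulCombination_single]
    · rw [mul_assoc, ← prod_pow_add_single]
      exact ih (c j) _ (hsum j)

theorem range_mulCombination_sup_span_range_pow [DecidableEq ι] (p : ℕ) (q : ι → S)
    {W : Submodule R S} (hW : Codisjoint W ((Ideal.span (Set.range q)).restrictScalars R)) :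
    LinearMap.range (mulCombination W.subtype fun a : ι → Fin p => ∏ i, q i ^ (a i : ℕ)) ⊔
      (Ideal.span (Set.range fun i => q i ^ p)).restrictScalars R = ⊤ := by
  refine eq_top_iff.2 fun s _ => ?_
  simpa using mul_prod_pow_mem_range_mulCombination_sup p q hW
    (Fintype.card ι * (p - 1) + 1) s 0 (by simp)

theorem mul_prod_pow_sub_one_mem_span_range_pow (p : ℕ) {q : ι → S} {s : S}
    (hs : s ∈ Ideal.span (Set.range q)) :
    s * ∏ i, q i ^ (p - 1) ∈ Ideal.span (Set.range fun i => q i ^ p) := by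
  classical
  obtain ⟨c, rfl⟩ := Ideal.mem_span_range_iff_exists_fun.1 hs
  rw [Finset.sum_mul]
  refine sum_mem fun j _ => ?_
  rw [mul_assoc, ← prod_pow_add_single q (fun _ => p - 1) j]
  exact mul_prod_pow_mem_span_range_pow q (j := j)
    (by simp only [Pi.add_apply, Pi.single_eq_same]; omega) _

theorem mul_prod_pow_sub_one_mem_of_sum_mul_eq_zero {p : ℕ} (hp : 2 ≤ p)
    {q m : ι → S} (h : ∑ i, m i * q i = 0) (k : ι) :
    m k * ∏ i, q i ^ (p - 1) ∈ Ideal.span (Set.range fun i => q i ^ p) := by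
  classical
  let e : ι → ℕ := Function.update (fun _ => p - 1) k (p - 2)
  have hadd : e + Pi.single k 1 = fun _ => p - 1 := by
    ext i
    by_cases hi : i = k
    · subst hi
      simp only [e, Pi.add_apply, Function.update_self, Pi.single_eq_same]
      omega
    · simp [e, hi]
  have hprod : ∏ i, q i ^ (p - 1) = q k * ∏ i, q i ^ e i := by
    rw [← prod_pow_add_single, hadd]
  rw [← Finset.add_sum_erase _ _ (Finset.mem_univ k)] at h
  rw [hprod, ← mul_assoc, eq_neg_of_add_eq_zero_left h, neg_mul, Finset.sum_mul]
  refine neg_mem (sum_mem fun j hj => ?_)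
  rw [mul_assoc, ← prod_pow_add_single]
  refine mul_prod_pow_mem_span_range_pow q (j := j) ?_ _
  simp only [e, Pi.add_apply, Function.update_of_ne (Finset.ne_of_mem_erase hj),
    Pi.single_eq_same]
  omega

end PowerSpanning

section FiniteQuotient

variable {R V M : Type*} [CommRing R] [AddCommGroup V] [Module R V] [AddCommGroup M] [Module R M]

theorem comap_eq_bot_of_range_sup_eq_top [Module.Finite R V] {f g : V →ₗ[R] M} {N : Submodule R M}
    (hf : N.comap f = ⊥) (hg : LinearMap.range g ⊔ N = ⊤) : N.comap g = ⊥ := by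
  have hinj : Function.Injective (N.mkQ ∘ₗ f) := by
    rw [← LinearMap.ker_eq_bot, LinearMap.ker_comp, N.ker_mkQ, hf]
  have hsurj : Function.Surjective (N.mkQ ∘ₗ g) := by
    rw [← LinearMap.range_eq_top, LinearMap.range_comp, Submodule.map_mkQ_eq_top, sup_comm, hg]
  have := Module.Finite.of_surjective _ hsurj
  have h := OrzechProperty.injective_of_surjective_of_injective _ _ hinj hsurj
  rwa [← LinearMap.ker_eq_bot, LinearMap.ker_comp, N.ker_mkQ] at h

end FiniteQuotient

section Colon

variable {ι : Type*} [Fintype ι] {p : ℕ}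

theorem mem_of_mulCombination_expand_mem [DecidableEq ι] {R M : Type*} [CommSemiring R]
    [AddCommMonoid M] [Module R M] {I : Ideal (MvPolynomial ι R)} (f : M →ₗ[R] MvPolynomial ι R)
    {w : (ι → Fin p) → M}
    (hw : mulCombination ((expand p).toLinearMap ∘ₗ f) (fun a : ι → Fin p =>
      monomial (Finsupp.equivFunOnFinite.symm fun i => (a i : ℕ)) 1) w ∈ I.map (expand p))
    (a : ι → Fin p) : f (w a) ∈ I := by
  let x (b : ι → Fin p) : ι →₀ ℕ := Finsupp.equivFunOnFinite.symm fun i => (b i : ℕ)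
  have hx (b : ι → Fin p) (i : ι) : x b i < p := (b i).isLt
  have hinj (b : ι → Fin p) : x b = x a ↔ b = a := by
    simp [x, funext_iff, Fin.ext_iff]
  have h := expandComponent_mem (hx a) hw
  simpa [mulCombination_apply, expandComponent_expand_mul, expandComponent_monomial _ (hx _),
    x, hinj] using h

variable [Fact p.Prime] {q : ι → MvPolynomial ι (ZMod p)}

theorem mem_span_range_of_mul_prod_pow_sub_one_mem
    [Module.Finite (ZMod p) (MvPolynomial ι (ZMod p) ⧸ Ideal.span (Set.range q))]
    {f : MvPolynomial ι (ZMod p)}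
    (hf : f * ∏ i, q i ^ (p - 1) ∈ Ideal.span (Set.range fun i => q i ^ p)) :
    f ∈ Ideal.span (Set.range q) := by
  classical
  set I := Ideal.span (Set.range q)
  set J := Ideal.span (Set.range fun i => q i ^ p)
  have hIJ : I.map (expand p) = J := by
    rw [Ideal.map_span, ← Set.range_comp]
    simp only [Function.comp_def, expand_zmod, J]
  obtain ⟨W, hW⟩ := Submodule.exists_isCompl (I.restrictScalars (ZMod p))
  have : Module.Finite (ZMod p) (MvPolynomial ι (ZMod p) ⧸ I.restrictScalars (ZMod p)) := ‹_›
  have : Module.Finite (ZMod p) W := .equiv (Submodule.quotientEquivOfIsCompl _ W hW)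
  let Φ := mulCombination ((expand p).toLinearMap ∘ₗ W.subtype) fun a : ι → Fin p =>
    monomial (Finsupp.equivFunOnFinite.symm fun i => (a i : ℕ)) 1
  let Ψ := mulCombination W.subtype fun a : ι → Fin p => ∏ i, q i ^ (a i : ℕ)
  have hΦ : (J.restrictScalars (ZMod p)).comap Φ = ⊥ := by
    refine eq_bot_iff.2 fun w hw => funext fun a => Subtype.ext ?_
    have hwI := mem_of_mulCombination_expand_mem W.subtype (I := I) (hIJ ▸ hw) a
    exact Submodule.disjoint_def.1 hW.disjoint _ hwI (w a).2
  have hΨ : (J.restrictScalars (ZMod p)).comap Ψ = ⊥ :=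
    comap_eq_bot_of_range_sup_eq_top hΦ
      (range_mulCombination_sup_span_range_pow p q hW.symm.codisjoint)
  obtain ⟨g, w, hg, hw, rfl⟩ := Submodule.codisjoint_iff_exists_add_eq.1 hW.codisjoint f
  have hwJ : w * ∏ i, q i ^ (p - 1) ∈ J := by
    simpa [add_mul] using sub_mem hf (mul_prod_pow_sub_one_mem_span_range_pow p hg)
  let v : (ι → Fin p) → W :=
    Pi.single (fun _ => ⟨p - 1, Nat.sub_one_lt (NeZero.ne p)⟩) ⟨w, hw⟩
  have hv : v ∈ (J.restrictScalars (ZMod p)).comap Ψ := by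
    simpa [Ψ, v, mulCombination_single] using hwJ
  have hw0 : w = 0 := by
    simpa [hΨ, v, Pi.single_eq_zero_iff] using hv
  simpa [hw0] using hg

theorem mem_span_range_of_sum_mul_eq_zero
    [Module.Finite (ZMod p) (MvPolynomial ι (ZMod p) ⧸ Ideal.span (Set.range q))]
    {m : ι → MvPolynomial ι (ZMod p)} (h : ∑ i, m i * q i = 0) (k : ι) :
    m k ∈ Ideal.span (Set.range q) :=
  mem_span_range_of_mul_prod_pow_sub_one_mem <|
    mul_prod_pow_sub_one_mem_of_sum_mul_eq_zero (Fact.out : p.Prime).two_le h k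

end Colon

section Degree

theorem eq_zero_of_mem_span_of_totalDegree_lt {σ R : Type*} [CommSemiring R] {d : ℕ}
    {s : Set (MvPolynomial σ R)} (hs : ∀ f ∈ s, f.IsHomogeneous d) {f : MvPolynomial σ R}
    (hf : f ∈ Ideal.span s) (hd : f.totalDegree < d) : f = 0 := by
  have hle : Ideal.span s ≤ idealOfVars σ R ^ d := Ideal.span_le.2 fun g hg =>
    mem_pow_idealOfVars_iff' d g |>.2 fun x hx => (hs g hg).coeff_eq_zero (by grind)
  ext u
  by_cases hu : u.degree < d
  · exact (mem_pow_idealOfVars_iff' d f).1 (hle hf) u hu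
  · exact coeff_eq_zero_of_totalDegree_lt (hd.trans_le (not_lt.1 hu))

theorem eq_of_mulVec_eq_of_totalDegree_lt {p d : ℕ} [Fact p.Prime] {ι r : Type*} [Fintype ι]
    {q : ι → MvPolynomial ι (ZMod p)}
    [Module.Finite (ZMod p) (MvPolynomial ι (ZMod p) ⧸ Ideal.span (Set.range q))]
    (hq : ∀ k, (q k).IsHomogeneous d) {M N : Matrix r ι (MvPolynomial ι (ZMod p))}
    (hM : ∀ i j, (M i j).totalDegree < d) (hN : ∀ i j, (N i j).totalDegree < d)
    (h : M.mulVec q = N.mulVec q) : M = N := by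
  ext1 i j
  have hsyzygy : ∑ k, (M i k - N i k) * q k = 0 := by
    simp only [sub_mul, Finset.sum_sub_distrib]
    exact sub_eq_zero.2 (congrFun h i)
  have hdeg : (M i j - N i j).totalDegree < d :=
    (totalDegree_sub _ _).trans_lt (max_lt (hM i j) (hN i j))
  exact sub_eq_zero.1 (eq_zero_of_mem_span_of_totalDegree_lt (Set.forall_mem_range.2 hq)
    (mem_span_range_of_sum_mul_eq_zero hsyzygy j) hdeg)

end Degree

section FrobeniusOrbit

open QuadraticMap

variable {R M N : Type*} [CommRing R] [AddCommGroup M] [Module R M] [AddCommGroup N] [Module R N]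
  {Q : QuadraticMap R M N}

theorem map_sum_eq_zero_of_polar_eq_zero {ι : Type*} (s : Finset ι) {v : ι → M}
    (hv : ∀ i, Q (v i) = 0) (hpolar : ∀ i j, polar Q (v i) (v j) = 0) : Q (∑ i ∈ s, v i) = 0 := by
  classical
  rw [QuadraticMap.map_sum, Finset.sum_eq_zero fun i _ => hv i, zero_add]
  refine Finset.sum_eq_zero fun ij _ => ?_
  induction ij with | _ i j
  exact hpolar i j

variable {f : M →+ M} {g : N →+ N} (hfg : Function.Semiconj Q f g)
include hfg

theorem polar_iterate_iterate (t : ℕ) (x y : M) :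
    polar Q (f^[t] x) (f^[t] y) = g^[t] (polar Q x y) := by
  simp only [polar, ← iterate_map_add, (hfg.iterate_right t).eq, iterate_map_sub]

variable (hpolar : ∀ y, Q y = 0 → polar Q y (f y) = 0)
include hpolar

theorem polar_iterate_eq_zero {y : M} (hy : Q y = 0) (t : ℕ) : polar Q y (f^[t] y) = 0 := by
  have hiter (t : ℕ) : Q (f^[t] y) = 0 := by rw [hfg.iterate_right t, hy, iterate_map_zero]
  induction t using Nat.twoStepInduction with
  | zero => simp [polar_self, hy]
  | one => exact hpolar y hy
  | more t ih ih' =>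
    have hcross : polar Q (f^[t + 1] y) (f y) = 0 := by
      have h := polar_iterate_iterate hfg 1 (f^[t] y) y
      rwa [polar_comm Q (f^[t] y), ih, iterate_map_zero, ← Function.iterate_add_apply,
        add_comm] at h
    -- The sum is again a zero of `Q`; expanding `polar Q (y + z) (f y + f z) = 0` with
    -- `z = f^[t + 1] y` leaves the single new term `polar Q y (f z)`.
    have hsum : Q (y + f^[t + 1] y) = 0 := by
      rw [QuadraticMap.map_add Q, hy, hiter, ih', add_zero, add_zero]
    have h := hpolar _ hsum
    rw [map_add, polar_add_left, polar_add_right, polar_add_right, hpolar y hy, hcross,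
      hpolar _ (hiter _), zero_add, add_zero, add_zero] at h
    rwa [Function.iterate_succ_apply']

theorem polar_iterate_iterate_eq_zero {y : M} (hy : Q y = 0) (s t : ℕ) :
    polar Q (f^[s] y) (f^[t] y) = 0 := by
  wlog hst : s ≤ t generalizing s t
  · rw [polar_comm, this t s (le_of_not_ge hst)]
  obtain ⟨t, rfl⟩ := Nat.exists_eq_add_of_le hst
  rw [Function.iterate_add_apply, polar_iterate_iterate hfg,
    polar_iterate_eq_zero hfg hpolar hy, iterate_map_zero]

theorem map_sum_iterate_eq_zero {y : M} (hy : Q y = 0) (r : ℕ) :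
    Q (∑ t ∈ Finset.range r, f^[t] y) = 0 :=
  map_sum_eq_zero_of_polar_eq_zero _
    (fun t => by rw [hfg.iterate_right t, hy, iterate_map_zero])
    (polar_iterate_iterate_eq_zero hfg hpolar hy)

end FrobeniusOrbit

section MatrixQuadraticMap

variable {R ι κ : Type*} [CommRing R] [Fintype ι] [DecidableEq ι]

/-- The quadratic map `x ↦ ∑ i j, x i * x j • A i j` with coefficients in `κ → R`, with scalars
extended to the `R`-algebra `K`. -/
noncomputable def extendedQuadraticMap (A : Matrix ι ι (κ → R)) (K : Type*) [CommRing K]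
    [Algebra R K] : QuadraticMap K (ι → K) (κ → K) :=
  LinearMap.BilinMap.toQuadraticMap
    (Matrix.toLinearMap₂' K (A.map fun c k => algebraMap R K (c k)))

variable {K L : Type*} [CommRing K] [Algebra R K] [CommRing L] [Algebra R L]

theorem extendedQuadraticMap_apply (A : Matrix ι ι (κ → R)) (x : ι → K) (k : κ) :
    extendedQuadraticMap A K x k = ∑ i, ∑ j, algebraMap R K (A i j k) * (x i * x j) := by
  simp only [extendedQuadraticMap, LinearMap.BilinMap.toQuadraticMap_apply,
    Matrix.toLinearMap₂'_apply, Finset.sum_apply, Pi.smul_apply, Matrix.map_apply, smul_eq_mul]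
  exact Finset.sum_congr rfl fun i _ => Finset.sum_congr rfl fun j _ => by ring

theorem polar_extendedQuadraticMap_apply (A : Matrix ι ι (κ → R)) (x y : ι → K) (k : κ) :
    QuadraticMap.polar (extendedQuadraticMap A K) x y k =
      ∑ i, ∑ j, algebraMap R K (A i j k) * (x i * y j + y i * x j) := by
  simp only [extendedQuadraticMap, LinearMap.BilinMap.polar_toQuadraticMap, Pi.add_apply,
    Matrix.toLinearMap₂'_apply, Finset.sum_apply, Pi.smul_apply, Matrix.map_apply, smul_eq_mul,
    ← Finset.sum_add_distrib]
  exact Finset.sum_congr rfl fun i _ => Finset.sum_congr rfl fun j _ => by ring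

theorem extendedQuadraticMap_comp_algHom (A : Matrix ι ι (κ → R)) (φ : K →ₐ[R] L) (x : ι → K) :
    extendedQuadraticMap A L (φ ∘ x) = φ ∘ extendedQuadraticMap A K x := by
  ext k
  simp [extendedQuadraticMap_apply]

end MatrixQuadraticMap

section Trace

variable {F K ι κ : Type*} [Field F] [Fintype F] [Field K] [Algebra F K] [FiniteDimensional F K]
  [Fintype ι] [DecidableEq ι] {A : Matrix ι ι (κ → F)}

theorem extendedQuadraticMap_trace_eq_zero (hpolar : ∀ y : ι → K, extendedQuadraticMap A K y = 0 →
      QuadraticMap.polar (extendedQuadraticMap A K) y (FiniteField.frobeniusAlgHom F K ∘ y) = 0)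
    {x : ι → K} (hx : extendedQuadraticMap A K x = 0) :
    extendedQuadraticMap A F (fun i => Algebra.trace F K (x i)) = 0 := by
  let φ := FiniteField.frobeniusAlgHom F K
  let f : (ι → K) →+ (ι → K) := φ.toLinearMap.toAddMonoidHom.compLeft ι
  let g : (κ → K) →+ (κ → K) := φ.toLinearMap.toAddMonoidHom.compLeft κ
  have hfg : Function.Semiconj (extendedQuadraticMap A K) f g :=
    extendedQuadraticMap_comp_algHom A φ
  have hf (t : ℕ) (i : ι) : f^[t] x i = x i ^ Fintype.card F ^ t := by
    have heval : Function.Semiconj (fun y : ι → K => y i) f φ := fun _ => rfl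
    have hiter : f^[t] x i = φ^[t] (x i) := heval.iterate_right t x
    rwa [FiniteField.coe_frobeniusAlgHom, pow_iterate] at hiter
  have htrace : Algebra.ofId F K ∘ (fun i => Algebra.trace F K (x i)) =
      ∑ t ∈ Finset.range (Module.finrank F K), f^[t] x := by
    have := Module.finite_of_finite F (M := K)
    ext i
    rw [Function.comp_apply, Algebra.ofId_apply, FiniteField.algebraMap_trace_eq_sum_pow,
      Finset.sum_apply, Nat.card_eq_fintype_card]
    exact Finset.sum_congr rfl fun t _ => (hf t i).symm
  have h := map_sum_iterate_eq_zero hfg hpolar hx (Module.finrank F K)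
  rw [← htrace, extendedQuadraticMap_comp_algHom] at h
  ext k
  simpa [Algebra.ofId_apply] using congrFun h k

theorem eq_zero_of_extendedQuadraticMap_eq_zero
    (hF : ∀ w : ι → F, extendedQuadraticMap A F w = 0 → w = 0)
    (hpolar : ∀ y : ι → K, extendedQuadraticMap A K y = 0 →
      QuadraticMap.polar (extendedQuadraticMap A K) y (FiniteField.frobeniusAlgHom F K ∘ y) = 0)
    {x : ι → K} (hx : extendedQuadraticMap A K x = 0) : x = 0 := by
  ext i
  refine (traceForm_nondegenerate F K).1 (x i) fun a => ?_
  have hax : extendedQuadraticMap A K (a • x) = 0 := by rw [QuadraticMap.map_smul, hx, smul_zero]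
  have htrace := congrFun (hF _ (extendedQuadraticMap_trace_eq_zero hpolar hax)) i
  simpa [Algebra.traceForm_apply, mul_comm] using htrace

end Trace

section Radical

universe u v

theorem finite_quotient_of_X_mem_radical {σ R : Type*} [Finite σ] [CommRing R]
    {I : Ideal (MvPolynomial σ R)} (h : ∀ i, X i ∈ I.radical) :
    Module.Finite R (MvPolynomial σ R ⧸ I) := by
  have hX (i : σ) : IsIntegral R (Ideal.Quotient.mk I (X i)) := by
    obtain ⟨n, hn⟩ := h i
    refine IsIntegral.of_pow (n := n + 1) n.succ_pos ?_
    rw [pow_succ, ← map_pow, Ideal.Quotient.eq_zero_iff_mem.2 hn, zero_mul]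
    exact isIntegral_zero
  have : Algebra.IsIntegral R (MvPolynomial σ R ⧸ I) := by
    refine ⟨fun x => ?_⟩
    obtain ⟨f, rfl⟩ := Ideal.Quotient.mk_surjective x
    induction f using MvPolynomial.induction_on with
    | C r => exact isIntegral_algebraMap (x := r)
    | add f g hf hg => exact map_add (Ideal.Quotient.mk I) f g ▸ hf.add hg
    | mul_X f i hf => exact map_mul (Ideal.Quotient.mk I) f (X i) ▸ hf.mul (hX i)
  exact Algebra.IsIntegral.finite

theorem X_mem_radical_of_forall_eq_zero {σ : Type u} {F : Type v} [Finite σ] [Field F]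
    {I : Ideal (MvPolynomial σ F)}
    (h : ∀ (K : Type (max u v)) [Field K] [Algebra F K] [FiniteDimensional F K] (x : σ → K),
      (∀ f ∈ I, aeval x f = 0) → x = 0) (i : σ) : X i ∈ I.radical := by
  rw [Ideal.radical_eq_jacobson, Ideal.jacobson, Ideal.mem_sInf]
  rintro M ⟨hIM, hM⟩
  let _ : Field (MvPolynomial σ F ⧸ M) := Ideal.Quotient.field M
  have : Module.Finite F (MvPolynomial σ F ⧸ M) := finite_of_finite_type_of_isJacobsonRing _ _
  have hzero := h (MvPolynomial σ F ⧸ M) (Ideal.Quotient.mkₐ F M ∘ X) fun f hf => by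
    rw [← aeval_unique (Ideal.Quotient.mkₐ F M)]
    exact Ideal.Quotient.eq_zero_iff_mem.2 (hIM hf)
  exact Ideal.Quotient.eq_zero_iff_mem.1 (congrFun hzero i)

end Radical

section AssocPoly

variable {m n : ℕ} (Q : (Fin m → ZMod 2) → Fin n → ZMod 2)

/-- The upper triangular matrix of the coefficients of `x_i x_j` in the polynomials `q_k`, the
coefficients of all the `q_k` being collected into a vector indexed by `k`. -/
def coeffMatrix : Matrix (Fin m) (Fin m) (Fin n → ZMod 2) :=
  Matrix.of fun i j =>
    if i = j then Q (Pi.single i 1)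
    else if i < j then qpolar Q (Pi.single i 1) (Pi.single j 1) else 0

theorem assocPoly_eq_sum_coeffMatrix (k : Fin n) :
    assocPoly Q k = ∑ i, ∑ j, C (coeffMatrix Q i j k) * (X i * X j) := by
  rw [assocPoly, ← Finset.sum_add_distrib]
  refine Finset.sum_congr rfl fun i _ => ?_
  have hdiag : C (Q (Pi.single i 1) k) * X i ^ 2 =
      ∑ j, if i = j then C (Q (Pi.single i 1) k) * (X i * X j) else 0 := by
    simp [sq]
  rw [hdiag, ← Finset.sum_add_distrib]
  refine Finset.sum_congr rfl fun j _ => ?_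
  by_cases hij : i = j
  · simp [coeffMatrix, hij]
  · by_cases hlt : i < j <;> simp [coeffMatrix, hij, hlt, mul_assoc]

theorem isHomogeneous_assocPoly (k : Fin n) : (assocPoly Q k).IsHomogeneous 2 := by
  rw [assocPoly_eq_sum_coeffMatrix]
  refine .sum _ _ _ fun i _ => .sum _ _ _ fun j _ => ?_
  exact ((isHomogeneous_X _ i).mul (isHomogeneous_X _ j)).C_mul _

theorem aeval_assocPoly {K : Type*} [CommRing K] [Algebra (ZMod 2) K] (x : Fin m → K)
    (k : Fin n) : aeval x (assocPoly Q k) = extendedQuadraticMap (coeffMatrix Q) K x k := by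
  simp [assocPoly_eq_sum_coeffMatrix, extendedQuadraticMap_apply]

theorem bockstein_eq_mkDerivation (f : MvPolynomial (Fin m) (ZMod 2)) :
    bockstein f = mkDerivation (ZMod 2) (fun i => X i ^ 2) f := by
  have hsum : mkDerivation (ZMod 2) (fun i => X i ^ 2) =
      ∑ i : Fin m, (X i ^ 2 : MvPolynomial (Fin m) (ZMod 2)) • pderiv i :=
    derivation_ext fun j => by
      rw [mkDerivation_X, ← Derivation.coeFnAddMonoidHom_apply, map_sum, Finset.sum_apply,
        Fintype.sum_eq_single j fun i hi => by simp [pderiv_X_of_ne hi.symm]]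
      simp
  rw [hsum, ← Derivation.coeFnAddMonoidHom_apply, map_sum, Finset.sum_apply]
  rfl

theorem aeval_bockstein_assocPoly {K : Type*} [CommRing K] [Algebra (ZMod 2) K] (x : Fin m → K)
    (k : Fin n) : aeval x (bockstein (assocPoly Q k)) =
      QuadraticMap.polar (extendedQuadraticMap (coeffMatrix Q) K) x (fun i => x i ^ 2) k := by
  rw [bockstein_eq_mkDerivation, assocPoly_eq_sum_coeffMatrix, polar_extendedQuadraticMap_apply]
  simp only [map_sum]
  refine Finset.sum_congr rfl fun i _ => Finset.sum_congr rfl fun j _ => ?_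
  simp only [← algebraMap_eq, Derivation.leibniz, Derivation.map_algebraMap, mkDerivation_X,
    smul_eq_mul, mul_zero, add_zero, map_add, map_mul, map_pow, AlgHom.commutes, aeval_X]
  ring

end AssocPoly

section IsQuadraticMap

variable {W V : Type*} [AddCommGroup W] [AddCommGroup V] [Module (ZMod 2) V]

theorem qpolar_eq_polar_s12 (Q : W → V) : qpolar Q = QuadraticMap.polar Q := by
  ext x y
  simp only [qpolar, QuadraticMap.polar, ZModModule.sub_eq_add]

variable [Module (ZMod 2) W]

theorem IsQuadraticMap.map_zero {Q : W → V} (hQ : IsQuadraticMap Q) : Q 0 = 0 := by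
  simpa [qpolar, ZModModule.add_self] using hQ.1 0 0 0

/-- The Mathlib `QuadraticMap` over `ZMod 2` with underlying function `Q`. -/
def IsQuadraticMap.toQuadraticMap {Q : W → V} (hQ : IsQuadraticMap Q) :
    QuadraticMap (ZMod 2) W V :=
  QuadraticMap.ofPolar Q
    (fun a x => by
      obtain rfl | rfl : a = 0 ∨ a = 1 := by decide +revert
      all_goals simp [hQ.map_zero])
    (qpolar_eq_polar_s12 Q ▸ hQ.1)
    (fun a x y => by
      obtain rfl | rfl : a = 0 ∨ a = 1 := by decide +revert
      all_goals simp [QuadraticMap.polar, hQ.map_zero])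

theorem extendedQuadraticMap_coeffMatrix {m n : ℕ} {Q : (Fin m → ZMod 2) → Fin n → ZMod 2}
    (hQ : IsQuadraticMap Q) :
    extendedQuadraticMap (coeffMatrix Q) (ZMod 2) = hQ.toQuadraticMap := by
  rw [← hQ.toQuadraticMap.toQuadraticMap_toBilin (Pi.basisFun (ZMod 2) (Fin m)),
    extendedQuadraticMap, ← Matrix.toLinearMap₂'_toMatrix' (R := ZMod 2)
      (hQ.toQuadraticMap.toBilin (Pi.basisFun (ZMod 2) (Fin m)))]
  congr 2
  ext i j k
  have hbilin := hQ.toQuadraticMap.toBilin_apply (Pi.basisFun (ZMod 2) (Fin m)) i j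
  simp only [Pi.basisFun_apply] at hbilin
  rw [LinearMap.toMatrix₂'_apply, hbilin, coeffMatrix, qpolar_eq_polar_s12]
  rfl

end IsQuadraticMap

theorem finite_quotient_span_range_assocPoly {m n : ℕ} {Q : (Fin m → ZMod 2) → Fin n → ZMod 2}
    (hQ : IsQuadraticMap Q)
    (hBC : ∀ k, bockstein (assocPoly Q k) ∈ Ideal.span (Set.range (assocPoly Q)))
    (heff : ∀ w, Q w = 0 → w = 0) :
    Module.Finite (ZMod 2)
      (MvPolynomial (Fin m) (ZMod 2) ⧸ Ideal.span (Set.range (assocPoly Q))) := by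
  refine finite_quotient_of_X_mem_radical (X_mem_radical_of_forall_eq_zero
    fun K _ _ _ x hx => eq_zero_of_extendedQuadraticMap_eq_zero (A := coeffMatrix Q) ?_ ?_ ?_)
  · rw [extendedQuadraticMap_coeffMatrix hQ]
    exact heff
  · intro y hy
    have hle : Ideal.span (Set.range (assocPoly Q)) ≤ RingHom.ker (aeval y) := by
      refine Ideal.span_le.2 ?_
      rintro _ ⟨k, rfl⟩
      exact (aeval_assocPoly Q y k).trans (congrFun hy k)
    ext k
    exact (aeval_bockstein_assocPoly Q y k).symm.trans (hle (hBC k))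
  · ext k
    exact (aeval_assocPoly Q x k).symm.trans (hx _ (Ideal.subset_span ⟨k, rfl⟩))

theorem binding_matrix_unique_general {n : ℕ} {r : Type*}
    {Q : (Fin n → ZMod 2) → Fin n → ZMod 2} (hQ : IsQuadraticMap Q)
    (hBC : ∀ k, bockstein (assocPoly Q k) ∈ Ideal.span (Set.range (assocPoly Q)))
    (heff : ∀ w, Q w = 0 → w = 0)
    {M N : Matrix r (Fin n) (MvPolynomial (Fin n) (ZMod 2))}
    (hM : ∀ i j, (M i j).totalDegree < 2) (hN : ∀ i j, (N i j).totalDegree < 2)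
    (h : M.mulVec (assocPoly Q) = N.mulVec (assocPoly Q)) : M = N := by
  have := finite_quotient_span_range_assocPoly hQ hBC heff
  exact eq_of_mulVec_eq_of_totalDegree_lt (isHomogeneous_assocPoly Q) hM hN h

/-- For a Bockstein closed, effective, Frattini quadratic map
`Q : F₂^n → F₂^n`, the binding matrix is unique: if `L₁` and `L₂` are matrices of
homogeneous linear forms with `β(q) = L₁q = L₂q`, then `L₁ = L₂`. -/
theorem binding_matrix_unique {n : ℕ}
    (Q : (Fin n → ZMod 2) → (Fin n → ZMod 2)) (hQ : IsQuadraticMap Q)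
    (hBC : ∀ k : Fin n, bockstein (assocPoly Q k) ∈ Ideal.span (Set.range (assocPoly Q)))
    (heff : ∀ w, Q w = 0 → w = 0)
    (hfrat : Submodule.span (ZMod 2) (Set.range Q) = ⊤)
    (L₁ L₂ : Matrix (Fin n) (Fin n) (MvPolynomial (Fin n) (ZMod 2)))
    (h₁hom : ∀ i j, (L₁ i j).IsHomogeneous 1) (h₂hom : ∀ i j, (L₂ i j).IsHomogeneous 1)
    (h₁ : L₁.mulVec (fun k => assocPoly Q k) = fun k => bockstein (assocPoly Q k))
    (h₂ : L₂.mulVec (fun k => assocPoly Q k) = fun k => bockstein (assocPoly Q k)) :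
    L₁ = L₂ := by
  exact binding_matrix_unique_general hQ hBC heff
    (fun i j => (h₁hom i j).totalDegree_le.trans_lt one_lt_two)
    (fun i j => (h₂hom i j).totalDegree_le.trans_lt one_lt_two) (h₁.trans h₂.symm)
end
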